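/- arXiv:2508.08809 — 2 statements merged into one kernel-verified Lean document; each statement's English description precedes it below -/
import Mathlib

section
/- Let μ ∈ (0,1]. The function g_μ(ξ) = (tanh(√μ |ξ|)/(√μ |ξ|))^{1/2} (with g_μ(0) = 1) extends to a smooth function on ℝ, and for every n ∈ ℕ there is a constant C_n, independent of μ, such that |g_μ^{(n)}(ξ)| ≤ C_n μ^{n/2} ⟨√μ ξ⟩^{-1/2 - n} for all ξ ∈ ℝ, where g_μ^{(n)} denotes the n-th derivative. -/
noncomputable section

/-- The Japanese bracket `⟨x⟩ = (1 + x²)^{1/2}`. -/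
def jap (x : ℝ) : ℝ := (1 + x ^ 2) ^ ((1 : ℝ) / 2)

/-- The symbol `T_μ(ξ) = tanh(√μ |ξ|)/(√μ |ξ|)` for `ξ ≠ 0`, with value `1` at `ξ = 0`. -/
def Tsymb (μ ξ : ℝ) : ℝ :=
  if ξ = 0 then 1 else Real.tanh (Real.sqrt μ * |ξ|) / (Real.sqrt μ * |ξ|)

/-- `g_μ(ξ) = (tanh(√μ |ξ|)/(√μ |ξ|))^{1/2}`, with `g_μ(0) = 1`. -/
def gsymb (μ ξ : ℝ) : ℝ := Real.sqrt (Tsymb μ ξ)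

/-!
Since `g_μ(ξ) = g_1(√μ ξ)`, everything reduces to `μ = 1`, where the claim says that `g_1` is a
symbol of order `-1/2`. Smoothness holds because `tanh t / t` is analytic and positive. With
`w = exp (-2z)` one has `tanh z = (1 - w) / (1 + w)`, so `tanh` maps the right half-plane to itself
and is bounded on `1/2 ≤ re z`; hence `√(tanh z) / √z` extends `g_1` from the positive half-line to
a holomorphic function of size `|z|^{-1/2}`. Cauchy's estimate on the disc of radius `t / 2` about
`t ≥ 1` then gains a factor `1 / t` per derivative. On `[0, 1]` compactness suffices, and
the negative half-line follows by evenness.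
-/

open Complex Metric Set
open scoped ContDiff Nat Topology

section Bracket

lemma jap_eq_sqrt (x : ℝ) : jap x = √(1 + x ^ 2) := (Real.sqrt_eq_rpow _).symm

lemma jap_pos (x : ℝ) : 0 < jap x := by
  rw [jap_eq_sqrt]
  positivity

lemma continuous_jap : Continuous jap := by
  simp_rw [funext jap_eq_sqrt]
  fun_prop

lemma jap_neg (x : ℝ) : jap (-x) = jap x := by
  simp only [jap, neg_sq]

lemma le_jap (x : ℝ) : x ≤ jap x := by
  rw [jap_eq_sqrt]
  exact Real.le_sqrt_of_sq_le (by linarith)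

lemma jap_le_two_mul {x : ℝ} (hx : 1 ≤ x) : jap x ≤ 2 * x := by
  rw [jap_eq_sqrt, Real.sqrt_le_left (by positivity)]
  nlinarith

end Bracket

lemma rpow_le_rpow_abs_mul_rpow {a b K : ℝ} (r : ℝ) (ha : 0 < a) (hb : 0 < b)
    (hab : a ≤ K * b) (hba : b ≤ K * a) : a ^ r ≤ K ^ |r| * b ^ r := by
  have hK : 0 < K := pos_of_mul_pos_left (ha.trans_le hab) hb.le
  rcases le_total 0 r with hr | hr
  · calc a ^ r ≤ (K * b) ^ r := Real.rpow_le_rpow ha.le hab hr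
      _ = K ^ |r| * b ^ r := by rw [Real.mul_rpow hK.le hb.le, abs_of_nonneg hr]
  · calc a ^ r ≤ (K⁻¹ * b) ^ r :=
          Real.rpow_le_rpow_of_nonpos (by positivity) ((inv_mul_le_iff₀ hK).2 hba) hr
      _ = K ^ |r| * b ^ r := by
          rw [Real.mul_rpow (by positivity) hb.le, abs_of_nonpos hr, Real.rpow_neg hK.le,
            Real.inv_rpow hK.le]

section Symbol

variable {E : Type*} [NormedAddCommGroup E] [NormedSpace ℝ E] {f : ℝ → E} {s : ℝ}

/-- Symbols of order `s` on the line, i.e. the Hörmander class `S^s` of functions of the frequency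
alone: smooth functions whose `n`-th derivative is `O(⟨t⟩ ^ (s - n))`, uniformly on `ℝ`. -/
structure IsSymbol (s : ℝ) (f : ℝ → E) : Prop where
  contDiff : ContDiff ℝ ∞ f
  exists_bound (n : ℕ) : ∃ C : ℝ, ∀ t : ℝ, ‖iteratedDeriv n f t‖ ≤ C * jap t ^ (s - n)

lemma norm_iteratedDeriv_neg_of_even (hf : f.Even) (n : ℕ) (t : ℝ) :
    ‖iteratedDeriv n f (-t)‖ = ‖iteratedDeriv n f t‖ := by
  have h : iteratedDeriv n f t = (-1 : ℝ) ^ n • iteratedDeriv n f (-t) := by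
    simpa only [funext hf] using iteratedDeriv_comp_neg n f t
  rw [h, norm_smul, norm_pow, norm_neg, norm_one, one_pow, one_mul]

theorem IsSymbol.of_even (hf : ContDiff ℝ ∞ f) (heven : f.Even)
    (hbound : ∀ n : ℕ, ∃ C : ℝ, ∀ t : ℝ, 1 ≤ t → ‖iteratedDeriv n f t‖ ≤ C * jap t ^ (s - n)) :
    IsSymbol s f := by
  refine ⟨hf, fun n ↦ ?_⟩
  have hjap (t : ℝ) : 0 < jap t ^ (s - n) := Real.rpow_pos_of_pos (jap_pos t) _
  obtain ⟨C, hC⟩ := hbound n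
  have hcont : Continuous fun t ↦ ‖iteratedDeriv n f t‖ / jap t ^ (s - n) :=
    (hf.continuous_iteratedDeriv n (mod_cast le_top)).norm.div
      (continuous_jap.rpow_const fun t ↦ .inl (jap_pos t).ne') fun t ↦ (hjap t).ne'
  obtain ⟨M, hM⟩ := (isCompact_Icc (a := (0 : ℝ)) (b := 1)).bddAbove_image hcont.continuousOn
  refine ⟨max C M, fun t ↦ ?_⟩
  wlog ht : 0 ≤ t generalizing t
  · simpa only [norm_iteratedDeriv_neg_of_even heven, jap_neg] using this (-t) (by linarith)
  rcases le_total 1 t with ht1 | ht1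
  · exact (hC t ht1).trans (mul_le_mul_of_nonneg_right (le_max_left C M) (hjap t).le)
  · rw [← div_le_iff₀ (hjap t)]
    exact (hM (mem_image_of_mem _ ⟨ht, ht1⟩)).trans (le_max_right C M)

theorem IsSymbol.exists_bound_comp_const_mul (hf : IsSymbol s f) (n : ℕ) :
    ∃ C : ℝ, 0 < C ∧ ∀ a x : ℝ,
      ‖iteratedDeriv n (fun y ↦ f (a * y)) x‖ ≤ C * |a| ^ n * jap (a * x) ^ (s - n) := by
  obtain ⟨C, hC⟩ := hf.exists_bound n
  refine ⟨max C 1, by positivity, fun a x ↦ ?_⟩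
  have hjap : 0 ≤ jap (a * x) ^ (s - n) := Real.rpow_nonneg (jap_pos _).le _
  calc ‖iteratedDeriv n (fun y ↦ f (a * y)) x‖
      = |a| ^ n * ‖iteratedDeriv n f (a * x)‖ := by
        rw [iteratedDeriv_comp_const_smul (hf.contDiff.of_le (mod_cast le_top)), norm_smul,
          norm_pow, Real.norm_eq_abs]
    _ ≤ |a| ^ n * (max C 1 * jap (a * x) ^ (s - n)) := by
        gcongr
        exact (hC _).trans (mul_le_mul_of_nonneg_right (le_max_left C 1) hjap)
    _ = max C 1 * |a| ^ n * jap (a * x) ^ (s - n) := by ring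

end Symbol

section Holomorphic

lemma norm_iteratedDeriv_le_of_differentiableOn_closedBall {E : Type*} [NormedAddCommGroup E]
    [NormedSpace ℂ E] [CompleteSpace E] {F : ℂ → E} {c : ℂ} {A s : ℝ} (hc : c ≠ 0) (hA : 0 ≤ A)
    (hF : DifferentiableOn ℂ F (closedBall c (‖c‖ / 2)))
    (hbound : ∀ z ∈ sphere c (‖c‖ / 2), ‖F z‖ ≤ A * ‖z‖ ^ s) (n : ℕ) :
    ‖iteratedDeriv n F c‖ ≤ n ! * A * 2 ^ (|s| + n) * ‖c‖ ^ (s - n) := by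
  have hc0 : 0 < ‖c‖ := norm_pos_iff.2 hc
  have hsphere (z : ℂ) (hz : z ∈ sphere c (‖c‖ / 2)) : ‖F z‖ ≤ A * (2 ^ |s| * ‖c‖ ^ s) := by
    have hzc : ‖z - c‖ = ‖c‖ / 2 := mem_sphere_iff_norm.1 hz
    have hlower : ‖c‖ - ‖z‖ ≤ ‖z - c‖ := norm_sub_rev c z ▸ norm_sub_norm_le c z
    have hupper : ‖z‖ - ‖c‖ ≤ ‖z - c‖ := norm_sub_norm_le z c
    refine (hbound z hz).trans (mul_le_mul_of_nonneg_left ?_ hA)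
    exact rpow_le_rpow_abs_mul_rpow s (by linarith) hc0 (by linarith) (by linarith)
  calc ‖iteratedDeriv n F c‖
      ≤ n ! * (A * (2 ^ |s| * ‖c‖ ^ s)) / (‖c‖ / 2) ^ n :=
        norm_iteratedDeriv_le_of_forall_mem_sphere_norm_le n (half_pos hc0)
          (hF.diffContOnCl_ball subset_rfl) hsphere
    _ = n ! * A * 2 ^ (|s| + n) * ‖c‖ ^ (s - n) := by
        rw [Real.rpow_add two_pos, Real.rpow_sub hc0, Real.rpow_natCast, Real.rpow_natCast,
          div_pow]
        field_simp

lemma iteratedDeriv_re_comp_ofReal {F : ℂ → ℂ} {x : ℝ} (hF : AnalyticAt ℂ F x) (n : ℕ) :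
    iteratedDeriv n (fun t : ℝ ↦ (F t).re) x = (iteratedDeriv n F x).re := by
  induction n generalizing x with
  | zero => simp only [iteratedDeriv_zero]
  | succ n ih =>
    have hderiv : DifferentiableAt ℂ (iteratedDeriv n F) x := by
      rw [iteratedDeriv_eq_iterate]
      exact (hF.iterated_deriv n).differentiableAt
    have heq : iteratedDeriv n (fun t : ℝ ↦ (F t).re) =ᶠ[𝓝 x]
        fun t : ℝ ↦ (iteratedDeriv n F t).re :=
      (continuous_ofReal.continuousAt.eventually hF.eventually_analyticAt).mono fun _ ht ↦ ih ht
    rw [iteratedDeriv_succ, iteratedDeriv_succ, heq.deriv_eq,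
      hderiv.hasDerivAt.real_of_complex.deriv]

theorem IsSymbol.of_even_of_holomorphic {f : ℝ → ℝ} {F : ℂ → ℂ} {A s : ℝ}
    (hf : ContDiff ℝ ∞ f) (heven : f.Even) (hA : 0 ≤ A)
    (hF : DifferentiableOn ℂ F {z | 1 / 2 ≤ z.re})
    (hbound : ∀ z : ℂ, 1 / 2 ≤ z.re → ‖F z‖ ≤ A * ‖z‖ ^ s)
    (hfF : ∀ t : ℝ, 1 / 2 ≤ t → f t = (F t).re) : IsSymbol s f := by
  refine .of_even hf heven fun n ↦ ⟨n ! * A * 2 ^ (|s| + n) * 2 ^ |s - n|, fun t ht ↦ ?_⟩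
  have ht0 : 0 < t := by linarith
  have hnorm : ‖(t : ℂ)‖ = t := by rw [norm_real, Real.norm_of_nonneg ht0.le]
  have hball : closedBall (t : ℂ) (‖(t : ℂ)‖ / 2) ⊆ {z | 1 / 2 ≤ z.re} := fun z hz ↦ by
    have h : |(z - t).re| ≤ t / 2 :=
      (abs_re_le_norm _).trans ((mem_closedBall_iff_norm.1 hz).trans_eq (by rw [hnorm]))
    rw [sub_re, ofReal_re] at h
    exact le_trans (by linarith) (sub_le_of_abs_sub_le_left h)
  have hanalytic : AnalyticAt ℂ F t :=
    hF.analyticAt (Filter.mem_of_superset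
      (closedBall_mem_nhds _ (by rw [hnorm]; exact half_pos ht0)) hball)
  have hfF' : f =ᶠ[𝓝 t] fun t : ℝ ↦ (F t).re :=
    (eventually_ge_nhds (by linarith)).mono hfF
  have hcauchy : ‖iteratedDeriv n F t‖ ≤ n ! * A * 2 ^ (|s| + n) * t ^ (s - n) := by
    simpa only [hnorm] using norm_iteratedDeriv_le_of_differentiableOn_closedBall
      (ofReal_ne_zero.2 ht0.ne') hA (hF.mono hball)
      (fun z hz ↦ hbound z (hball (sphere_subset_closedBall hz))) n
  have hjap : t ^ (s - n) ≤ 2 ^ |s - n| * jap t ^ (s - n) :=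
    rpow_le_rpow_abs_mul_rpow _ ht0 (jap_pos t) (by linarith [le_jap t]) (jap_le_two_mul ht)
  calc ‖iteratedDeriv n f t‖ = |(iteratedDeriv n F t).re| := by
        rw [hfF'.iteratedDeriv_eq, iteratedDeriv_re_comp_ofReal hanalytic, Real.norm_eq_abs]
    _ ≤ n ! * A * 2 ^ (|s| + n) * t ^ (s - n) := (abs_re_le_norm _).trans hcauchy
    _ ≤ n ! * A * 2 ^ (|s| + n) * (2 ^ |s - n| * jap t ^ (s - n)) := by gcongr
    _ = n ! * A * 2 ^ (|s| + n) * 2 ^ |s - n| * jap t ^ (s - n) := by ring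

end Holomorphic

section Tanh

lemma one_add_ne_zero_of_norm_lt_one {w : ℂ} (hw : ‖w‖ < 1) : 1 + w ≠ 0 := fun h ↦ by
  rw [← neg_eq_of_add_eq_zero_right h, norm_neg, norm_one] at hw
  exact hw.false

lemma re_one_sub_div_one_add_pos {w : ℂ} (hw : ‖w‖ < 1) : 0 < ((1 - w) / (1 + w)).re := by
  have hnumer : (1 - w).re * (1 + w).re + (1 - w).im * (1 + w).im = 1 - ‖w‖ ^ 2 := by
    rw [← normSq_eq_norm_sq, normSq_apply]
    simp only [sub_re, add_re, one_re, sub_im, add_im, one_im]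
    ring
  rw [div_re, ← add_div, hnumer]
  exact div_pos (by nlinarith [norm_nonneg w])
    (normSq_pos.2 (one_add_ne_zero_of_norm_lt_one hw))

lemma norm_one_sub_div_one_add_le {w : ℂ} (hw : ‖w‖ < 1) :
    ‖(1 - w) / (1 + w)‖ ≤ (1 + ‖w‖) / (1 - ‖w‖) := by
  have hnumer : ‖1 - w‖ ≤ 1 + ‖w‖ := by simpa only [norm_one] using norm_sub_le 1 w
  have hdenom : 1 - ‖w‖ ≤ ‖1 + w‖ := by
    simpa only [norm_one, norm_neg, sub_neg_eq_add] using norm_sub_norm_le 1 (-w)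
  rw [norm_div]
  exact div_le_div₀ (by positivity) hnumer (sub_pos.2 hw) hdenom

lemma tanh_eq_one_sub_exp_div (z : ℂ) :
    tanh z = (1 - exp (-2 * z)) / (1 + exp (-2 * z)) := by
  have hexp : exp (-z) = exp z * exp (-2 * z) := by rw [← exp_add]; ring_nf
  rw [tanh_eq_sinh_div_cosh, sinh, cosh, div_div_div_cancel_right₀ two_ne_zero, hexp,
    ← mul_one_sub, ← mul_one_add, mul_div_mul_left _ _ (exp_ne_zero z)]

lemma norm_exp_neg_two_mul (z : ℂ) : ‖exp (-2 * z)‖ = Real.exp (-2 * z.re) := by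
  rw [norm_exp]
  simp

lemma norm_exp_neg_two_mul_lt_one {z : ℂ} (hz : 0 < z.re) : ‖exp (-2 * z)‖ < 1 := by
  rw [norm_exp_neg_two_mul, Real.exp_lt_one_iff]
  linarith

lemma re_tanh_pos {z : ℂ} (hz : 0 < z.re) : 0 < (tanh z).re := by
  rw [tanh_eq_one_sub_exp_div]
  exact re_one_sub_div_one_add_pos (norm_exp_neg_two_mul_lt_one hz)

lemma differentiableAt_tanh {z : ℂ} (hz : 0 < z.re) : DifferentiableAt ℂ tanh z := by
  have hdenom := one_add_ne_zero_of_norm_lt_one (norm_exp_neg_two_mul_lt_one hz)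
  rw [funext tanh_eq_one_sub_exp_div]
  fun_prop (disch := exact hdenom)

lemma norm_tanh_le_three {z : ℂ} (hz : 1 / 2 ≤ z.re) : ‖tanh z‖ ≤ 3 := by
  have hw1 : ‖exp (-2 * z)‖ < 1 := norm_exp_neg_two_mul_lt_one (by linarith)
  have hw : ‖exp (-2 * z)‖ ≤ 1 / 2 := by
    rw [norm_exp_neg_two_mul]
    calc Real.exp (-2 * z.re) ≤ Real.exp (-1) := Real.exp_le_exp.2 (by linarith)
      _ ≤ 1 / 2 := by linarith [Real.exp_neg_one_lt_half]
  rw [tanh_eq_one_sub_exp_div]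
  refine (norm_one_sub_div_one_add_le hw1).trans ?_
  rw [div_le_iff₀ (sub_pos.2 hw1)]
  linarith

lemma real_tanh_pos {t : ℝ} (ht : 0 < t) : 0 < Real.tanh t := by
  rw [Real.tanh_eq_sinh_div_cosh]
  exact div_pos (Real.sinh_pos_iff.2 ht) (Real.cosh_pos t)

lemma analyticAt_real_tanh (x : ℝ) : AnalyticAt ℝ Real.tanh x := by
  rw [funext Real.tanh_eq_sinh_div_cosh]
  exact Real.analyticAt_sinh.fun_div Real.analyticAt_cosh (Real.cosh_pos x).ne'

lemma deriv_real_tanh_zero : deriv Real.tanh 0 = 1 := by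
  rw [funext Real.tanh_eq_sinh_div_cosh,
    deriv_fun_div Real.differentiableAt_sinh Real.differentiableAt_cosh (Real.cosh_pos 0).ne']
  simp

end Tanh

lemma analyticAt_dslope {𝕜 E : Type*} [NontriviallyNormedField 𝕜] [NormedAddCommGroup E]
    [NormedSpace 𝕜 E] {f : 𝕜 → E} {a b : 𝕜} (ha : AnalyticAt 𝕜 f a) (hb : AnalyticAt 𝕜 f b) :
    AnalyticAt 𝕜 (dslope f a) b := by
  rcases eq_or_ne b a with rfl | hne
  · obtain ⟨p, hp⟩ := ha
    exact hp.has_fpower_series_dslope_fslope.analyticAt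
  · have hslope : AnalyticAt 𝕜 (fun x ↦ (x - a)⁻¹ • (f x - f a)) b :=
      ((analyticAt_id.sub analyticAt_const).inv (sub_ne_zero.2 hne)).smul (hb.sub analyticAt_const)
    exact hslope.congr (dslope_eventuallyEq_slope_of_ne f hne).symm

section Profile

variable {μ : ℝ}

lemma Tsymb_eq_Tsymb_one (hμ : 0 < μ) (ξ : ℝ) : Tsymb μ ξ = Tsymb 1 (√μ * ξ) := by
  simp [Tsymb, abs_mul, (Real.sqrt_pos.2 hμ).ne', abs_of_nonneg (Real.sqrt_nonneg μ)]

lemma gsymb_eq_gsymb_one (hμ : 0 < μ) : gsymb μ = fun ξ ↦ gsymb 1 (√μ * ξ) :=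
  funext fun ξ ↦ congrArg Real.sqrt (Tsymb_eq_Tsymb_one hμ ξ)

lemma even_gsymb (μ : ℝ) : (gsymb μ).Even := fun ξ ↦ by
  simp only [gsymb, Tsymb, neg_eq_zero, abs_neg]

lemma Tsymb_pos (hμ : 0 < μ) (ξ : ℝ) : 0 < Tsymb μ ξ := by
  rw [Tsymb]
  split_ifs with hξ
  · exact one_pos
  · have h : 0 < √μ * |ξ| := mul_pos (Real.sqrt_pos.2 hμ) (abs_pos.2 hξ)
    exact div_pos (real_tanh_pos h) h

lemma Tsymb_one_of_ne_zero {t : ℝ} (ht : t ≠ 0) : Tsymb 1 t = Real.tanh t / t := by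
  rw [Tsymb, if_neg ht, Real.sqrt_one, one_mul]
  rcases abs_choice t with h | h <;> rw [h]
  rw [Real.tanh_neg, neg_div_neg_eq]

lemma Tsymb_one_eq_dslope : Tsymb 1 = dslope Real.tanh 0 := by
  funext t
  rcases eq_or_ne t 0 with rfl | ht
  · rw [dslope_same, deriv_real_tanh_zero, Tsymb, if_pos rfl]
  · rw [Tsymb_one_of_ne_zero ht, dslope_of_ne _ ht, slope_def_field, Real.tanh_zero, sub_zero,
      sub_zero]

lemma contDiff_gsymb_one : ContDiff ℝ ∞ (gsymb 1) := by
  refine ContDiff.sqrt ?_ fun t ↦ (Tsymb_pos one_pos t).ne'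
  rw [Tsymb_one_eq_dslope, contDiff_iff_contDiffAt]
  exact fun t ↦ (analyticAt_dslope (analyticAt_real_tanh 0) (analyticAt_real_tanh t)).contDiffAt

/-- The holomorphic extension of `g_1` from the positive half-line to the right half-plane. The
root of `tanh z / z` is split into two factors, since `tanh z` and `z` both stay in the right
half-plane, where the principal branch of the power is holomorphic. -/
def gsymbExt (z : ℂ) : ℂ := tanh z ^ ((1 / 2 : ℝ) : ℂ) * z ^ ((-1 / 2 : ℝ) : ℂ)

lemma gsymbExt_ofReal {t : ℝ} (ht : 0 < t) : gsymbExt t = gsymb 1 t := by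
  have htanh : 0 ≤ Real.tanh t := (real_tanh_pos ht).le
  have hroot : √(Real.tanh t / t) = Real.tanh t ^ (1 / 2 : ℝ) * t ^ (-1 / 2 : ℝ) := by
    rw [Real.sqrt_eq_rpow, Real.div_rpow htanh ht.le, neg_div, Real.rpow_neg ht.le]
    exact div_eq_mul_inv _ _
  rw [gsymbExt, gsymb, Tsymb_one_of_ne_zero ht.ne', hroot, ← ofReal_tanh, ← ofReal_cpow htanh,
    ← ofReal_cpow ht.le, ← ofReal_mul]

lemma differentiableAt_gsymbExt {z : ℂ} (hz : 0 < z.re) : DifferentiableAt ℂ gsymbExt z :=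
  ((differentiableAt_tanh hz).cpow_const (.inl (re_tanh_pos hz))).mul
    (differentiableAt_id.cpow_const (.inl hz))

lemma norm_gsymbExt_le {z : ℂ} (hz : 1 / 2 ≤ z.re) :
    ‖gsymbExt z‖ ≤ 3 ^ (1 / 2 : ℝ) * ‖z‖ ^ (-1 / 2 : ℝ) := by
  rw [gsymbExt, norm_mul, norm_cpow_real, norm_cpow_real]
  gcongr
  exact norm_tanh_le_three hz

theorem isSymbol_gsymb_one : IsSymbol (-1 / 2) (gsymb 1) :=
  .of_even_of_holomorphic contDiff_gsymb_one (even_gsymb 1) (by positivity)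
    (fun _ hz ↦ (differentiableAt_gsymbExt (one_half_pos.trans_le hz)).differentiableWithinAt)
    (fun _ ↦ norm_gsymbExt_le)
    fun t ht ↦ by rw [gsymbExt_ofReal (one_half_pos.trans_le ht), ofReal_re]

end Profile

theorem gsymb_smooth_and_deriv_bounds_general :
    (∀ μ : ℝ, 0 < μ → ContDiff ℝ ∞ (gsymb μ)) ∧
      ∀ n : ℕ, ∃ C : ℝ, 0 < C ∧ ∀ μ : ℝ, 0 < μ → ∀ ξ : ℝ,
        |iteratedDeriv n (gsymb μ) ξ|
          ≤ C * μ ^ ((n : ℝ) / 2) * jap (√μ * ξ) ^ (-(1 : ℝ) / 2 - n) := by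
  refine ⟨fun μ hμ ↦ ?_, fun n ↦ ?_⟩
  · rw [gsymb_eq_gsymb_one hμ]
    exact contDiff_gsymb_one.comp (contDiff_const.mul contDiff_id)
  · obtain ⟨C, hC, hbound⟩ := isSymbol_gsymb_one.exists_bound_comp_const_mul n
    refine ⟨C, hC, fun μ hμ ξ ↦ ?_⟩
    have hpow : μ ^ ((n : ℝ) / 2) = |√μ| ^ n := by
      rw [abs_of_nonneg (Real.sqrt_nonneg μ), Real.rpow_div_two_eq_sqrt _ hμ.le, Real.rpow_natCast]
    rw [hpow, gsymb_eq_gsymb_one hμ]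
    exact hbound (√μ) ξ

/-- For `μ ∈ (0,1]`, the function `g_μ` is smooth on `ℝ`, and for every `n ∈ ℕ`
there is a constant `C_n`, independent of `μ`, with
`|g_μ^{(n)}(ξ)| ≤ C_n μ^{n/2} ⟨√μ ξ⟩^{-1/2 - n}` for all `ξ ∈ ℝ`. -/
theorem gsymb_smooth_and_deriv_bounds :
    (∀ μ : ℝ, 0 < μ → μ ≤ 1 → ContDiff ℝ (⊤ : ℕ∞) (gsymb μ)) ∧
      ∀ n : ℕ, ∃ C : ℝ, 0 < C ∧
        ∀ μ : ℝ, 0 < μ → μ ≤ 1 → ∀ ξ : ℝ,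
          |iteratedDeriv n (gsymb μ) ξ|
            ≤ C * μ ^ ((n : ℝ) / 2) * jap (Real.sqrt μ * ξ) ^ (-(1 : ℝ) / 2 - n) :=
  ⟨fun μ hμ _ ↦ gsymb_smooth_and_deriv_bounds_general.1 μ hμ, fun n ↦
    (gsymb_smooth_and_deriv_bounds_general.2 n).imp fun _ h ↦ ⟨h.1, fun μ hμ _ ↦ h.2 μ hμ⟩⟩
end
end

section
/- There exists a constant C (depending only on the cutoff β) such that for all λ > 0, all x ∈ ℝ and all t ∈ ℝ \ {0}, the oscillatory integral I_{λ,1}(x,t) = ∫_ℝ e^{i(xξ + t m_1(ξ))} β(|ξ|/λ) dξ satisfies |I_{λ,1}(x,t)| ≤ C |t|^{-1/2} λ^{-1/2} ⟨λ⟩^{5/4}. -/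
noncomputable section

open MeasureTheory

/-- The symbol `m₁(ξ) = ξ (tanh|ξ|/|ξ|)^{1/2}`, with `m₁(0) = 0`. -/
def m1 (ξ : ℝ) : ℝ :=
  if ξ = 0 then 0 else ξ * Real.sqrt (Real.tanh |ξ| / |ξ|)

/-- `β(s) = χ(s) - χ(2s)` built from the cutoff `χ`. -/
def betaCut (χ : ℝ → ℝ) (s : ℝ) : ℝ := χ s - χ (2 * s)

/-- The oscillatory integral `I_{λ,1}(x,t) = ∫_ℝ e^{i(xξ + t m₁(ξ))} β(|ξ|/λ) dξ`. -/
def oscInt (χ : ℝ → ℝ) (lam x t : ℝ) : ℂ :=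
  ∫ ξ : ℝ, Complex.exp (Complex.I * ((x * ξ + t * m1 ξ : ℝ) : ℂ)) *
    ((betaCut χ (|ξ| / lam) : ℝ) : ℂ)

/-!
On the positive half-line `m₁''` is negative and of size at least a constant times `ξ ⟨ξ⟩^{-5/2}`,
so on the dyadic shell `ξ ∼ λ` the second derivative of the phase is at least a constant times
`|t| λ ⟨λ⟩^{-5/2}`, uniformly in `x`. Van der Corput's lemma for the second derivative then bounds
the integral of the exponential over any subinterval of the shell by the inverse square root of
this quantity. Integration by parts inserts the amplitude `β(ξ/λ)` at the cost of its total
variation, which does not depend on `λ`. Since `m₁` is odd, reflection sends `ξ < 0` to `ξ > 0` with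
`(x, t)` replaced by `(-x, -t)`.
-/

open Set

section VanDerCorput

open Complex

variable {E : Type*} [NormedAddCommGroup E] [NormedSpace ℂ E]
  {φ φ' φ'' : ℝ → ℝ} {a b : ℝ}

lemma norm_integral_smul_le_of_norm_primitive_le [CompleteSpace E] {f : ℝ → ℂ} {ψ ψ' : ℝ → E}
    {M : ℝ} (hab : a ≤ b) (hf : ContinuousOn f (Icc a b))
    (hψ : ∀ x ∈ Icc a b, HasDerivWithinAt ψ (ψ' x) (Icc a b) x)
    (hψ' : IntervalIntegrable ψ' volume a b)
    (hM : ∀ x ∈ Icc a b, ‖∫ y in a..x, f y‖ ≤ M) :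
    ‖∫ x in a..b, f x • ψ x‖ ≤ M * (‖ψ b‖ + ∫ x in a..b, ‖ψ' x‖) := by
  have hf_int : IntervalIntegrable f volume a b := hf.intervalIntegrable_of_Icc hab
  have hF : ∀ x ∈ Ioo a b, HasDerivAt (fun u ↦ ∫ y in a..u, f y) (f x) x := fun x hx ↦
    intervalIntegral.integral_hasDerivAt_right
      ((hf.mono (Icc_subset_Icc_right hx.2.le)).intervalIntegrable_of_Icc hx.1.le)
      ((hf.mono Ioo_subset_Icc_self).stronglyMeasurableAtFilter isOpen_Ioo x hx)
      (hf.continuousAt (Icc_mem_nhds hx.1 hx.2))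
  have parts := intervalIntegral.integral_smul_deriv_eq_deriv_smul_of_hasDerivAt
    (u := fun x ↦ ∫ y in a..x, f y) (v := ψ) (u' := f) (v' := ψ') (a := a) (b := b)
    (intervalIntegral.continuousOn_primitive_interval
      (by rw [uIcc_of_le hab]; exact hf.integrableOn_Icc))
    (by rw [uIcc_of_le hab]; exact fun x hx ↦ (hψ x hx).continuousWithinAt)
    (by simpa only [min_eq_left hab, max_eq_right hab] using hF)
    (by
      rw [min_eq_left hab, max_eq_right hab]
      exact fun x hx ↦ (hψ x (Ioo_subset_Icc_self hx)).hasDerivAt (Icc_mem_nhds hx.1 hx.2))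
    hf_int hψ'
  rw [intervalIntegral.integral_same, zero_smul, sub_zero] at parts
  have hbound : ‖∫ x in a..b, (∫ y in a..x, f y) • ψ' x‖ ≤ M * ∫ x in a..b, ‖ψ' x‖ := by
    rw [← intervalIntegral.integral_const_mul]
    refine intervalIntegral.norm_integral_le_of_norm_le hab (ae_of_all _ fun x hx ↦ ?_)
      (hψ'.norm.const_mul M)
    rw [norm_smul]
    exact mul_le_mul_of_nonneg_right (hM x (Ioc_subset_Icc_self hx)) (norm_nonneg _)
  calc ‖∫ x in a..b, f x • ψ x‖
      = ‖(∫ y in a..b, f y) • ψ b - ∫ x in a..b, (∫ y in a..x, f y) • ψ' x‖ := by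
        rw [parts, sub_sub_cancel]
    _ ≤ ‖∫ y in a..b, f y‖ * ‖ψ b‖ + M * ∫ x in a..b, ‖ψ' x‖ :=
        (norm_sub_le _ _).trans (add_le_add (norm_smul_le _ _) hbound)
    _ ≤ M * (‖ψ b‖ + ∫ x in a..b, ‖ψ' x‖) := by
        rw [mul_add]
        gcongr
        exact hM b (right_mem_Icc.2 hab)

lemma intervalIntegrable_div_sq_and_integral_eq {g g' : ℝ → ℝ} (hab : a ≤ b)
    (hg : ∀ x ∈ Icc a b, HasDerivWithinAt g (g' x) (Icc a b) x)
    (hg' : ∀ x ∈ Icc a b, 0 ≤ g' x) (hg0 : ∀ x ∈ Icc a b, g x ≠ 0) :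
    IntervalIntegrable (fun x ↦ g' x / g x ^ 2) volume a b ∧
      ∫ x in a..b, g' x / g x ^ 2 = (g a)⁻¹ - (g b)⁻¹ := by
  have hderiv : ∀ x ∈ Icc a b,
      HasDerivWithinAt (fun y ↦ -(g y)⁻¹) (g' x / g x ^ 2) (Icc a b) x := fun x hx ↦
    ((hg x hx).fun_inv (hg0 x hx)).neg.congr_deriv (by ring)
  have hcont : ContinuousOn (fun y ↦ -(g y)⁻¹) (Icc a b) := fun x hx ↦
    (hderiv x hx).continuousWithinAt
  have hderiv' : ∀ x ∈ Ioo a b, HasDerivAt (fun y ↦ -(g y)⁻¹) (g' x / g x ^ 2) x := fun x hx ↦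
    (hderiv x (Ioo_subset_Icc_self hx)).hasDerivAt (Icc_mem_nhds hx.1 hx.2)
  have hint : IntervalIntegrable (fun x ↦ g' x / g x ^ 2) volume a b :=
    (intervalIntegrable_iff_integrableOn_Ioc_of_le hab).2 <|
      intervalIntegral.integrableOn_deriv_of_nonneg hcont hderiv' fun x hx ↦
        div_nonneg (hg' x (Ioo_subset_Icc_self hx)) (sq_nonneg _)
  refine ⟨hint, ?_⟩
  rw [intervalIntegral.integral_eq_sub_of_hasDerivAt_of_le hab hcont hderiv' hint]
  ring

lemma norm_integral_mul_exp_le_two (hab : a ≤ b)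
    (hφ : ∀ x ∈ Icc a b, HasDerivWithinAt φ (φ' x) (Icc a b) x)
    (hφ' : ContinuousOn φ' (Icc a b)) :
    ‖∫ x in a..b, (φ' x : ℂ) * exp (I * φ x)‖ ≤ 2 := by
  have hcont : ContinuousOn (fun x ↦ exp (I * φ x)) (Icc a b) := by
    have : ContinuousOn φ (Icc a b) := fun x hx ↦ (hφ x hx).continuousWithinAt
    fun_prop
  have hderiv : ∀ x ∈ Ioo a b,
      HasDerivAt (fun y ↦ exp (I * φ y)) (I * ((φ' x : ℂ) * exp (I * φ x))) x := fun x hx ↦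
    ((((hφ x (Ioo_subset_Icc_self hx)).hasDerivAt
      (Icc_mem_nhds hx.1 hx.2)).ofReal_comp).const_mul I).cexp.congr_deriv (by ring)
  have ftc : ∫ x in a..b, I * ((φ' x : ℂ) * exp (I * φ x)) = exp (I * φ b) - exp (I * φ a) :=
    intervalIntegral.integral_eq_sub_of_hasDerivAt_of_le hab hcont hderiv
      (ContinuousOn.intervalIntegrable_of_Icc hab (by fun_prop))
  rw [intervalIntegral.integral_const_mul] at ftc
  calc ‖∫ x in a..b, (φ' x : ℂ) * exp (I * φ x)‖
      = ‖exp (I * φ b) - exp (I * φ a)‖ := by rw [← ftc, norm_mul, norm_I, one_mul]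
    _ ≤ 2 := by
        refine (norm_sub_le _ _).trans_eq ?_
        rw [norm_exp_I_mul_ofReal, norm_exp_I_mul_ofReal, one_add_one_eq_two]

-- Integrate `exp (I * φ) = (φ' * exp (I * φ)) * (φ')⁻¹` by parts.
lemma norm_integral_exp_le_of_le_abs_deriv {δ : ℝ} (hab : a ≤ b) (hδ : 0 < δ)
    (hφ : ∀ x ∈ Icc a b, HasDerivWithinAt φ (φ' x) (Icc a b) x)
    (hφ' : ∀ x ∈ Icc a b, HasDerivWithinAt φ' (φ'' x) (Icc a b) x)
    (hφ'' : ∀ x ∈ Icc a b, 0 ≤ φ'' x) (hge : ∀ x ∈ Icc a b, δ ≤ |φ' x|) :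
    ‖∫ x in a..b, exp (I * φ x)‖ ≤ 6 / δ := by
  have hne : ∀ x ∈ Icc a b, φ' x ≠ 0 := fun x hx ↦ abs_pos.1 (hδ.trans_le (hge x hx))
  have hinv : ∀ x ∈ Icc a b, |(φ' x)⁻¹| ≤ 1 / δ := fun x hx ↦ by
    rw [abs_inv, ← one_div]
    exact one_div_le_one_div_of_le hδ (hge x hx)
  have hcont : ContinuousOn φ' (Icc a b) := fun x hx ↦ (hφ' x hx).continuousWithinAt
  have hcontφ : ContinuousOn φ (Icc a b) := fun x hx ↦ (hφ x hx).continuousWithinAt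
  obtain ⟨hint, hvar⟩ := intervalIntegrable_div_sq_and_integral_eq hab hφ' hφ'' hne
  have hprim : ∀ x ∈ Icc a b, ‖∫ y in a..x, (φ' y : ℂ) * exp (I * φ y)‖ ≤ 2 := fun x hx ↦
    have hsub := Icc_subset_Icc_right hx.2
    norm_integral_mul_exp_le_two hx.1 (fun y hy ↦ (hφ y (hsub hy)).mono hsub) (hcont.mono hsub)
  have habel := norm_integral_smul_le_of_norm_primitive_le hab (by fun_prop)
    (fun x hx ↦ ((hφ' x hx).fun_inv (hne x hx)).ofReal_comp)
    (by simp only [neg_div]; exact ⟨hint.neg.1.ofReal, hint.neg.2.ofReal⟩) hprim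
  have hnorm : ∀ x ∈ uIcc a b, ‖((-φ'' x / φ' x ^ 2 : ℝ) : ℂ)‖ = φ'' x / φ' x ^ 2 := fun x hx ↦ by
    rw [uIcc_of_le hab] at hx
    rw [norm_real, neg_div, norm_neg, Real.norm_of_nonneg (div_nonneg (hφ'' x hx) (sq_nonneg _))]
  have hcancel : ∀ x ∈ uIcc a b,
      ((φ' x : ℂ) * exp (I * φ x)) • (((φ' x)⁻¹ : ℝ) : ℂ) = exp (I * φ x) := fun x hx ↦ by
    have : (φ' x : ℂ) ≠ 0 := ofReal_ne_zero.2 (hne x (uIcc_of_le hab ▸ hx))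
    rw [smul_eq_mul, ofReal_inv]
    field_simp
  rw [intervalIntegral.integral_congr hcancel, intervalIntegral.integral_congr hnorm, hvar,
    norm_real, Real.norm_eq_abs] at habel
  have ha := (abs_le.1 (hinv a (left_mem_Icc.2 hab))).2
  have hb := hinv b (right_mem_Icc.2 hab)
  calc ‖∫ x in a..b, exp (I * φ x)‖ ≤ 2 * (|(φ' b)⁻¹| + ((φ' a)⁻¹ - (φ' b)⁻¹)) := habel
    _ ≤ 2 * (1 / δ + (1 / δ + 1 / δ)) := by linarith [(abs_le.1 hb).1]
    _ = 6 / δ := by ring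

lemma exists_mul_abs_sub_le_abs {p : ℝ → ℝ} {μ : ℝ} (hab : a ≤ b)
    (hp : ContinuousOn p (Icc a b)) (hmono : MonotoneOn (fun x ↦ p x - μ * x) (Icc a b)) :
    ∃ c ∈ Icc a b, ∀ x ∈ Icc a b, μ * |x - c| ≤ |p x| := by
  have hright : ∀ c ∈ Icc a b, 0 ≤ p c → ∀ x ∈ Icc a b, c ≤ x → μ * |x - c| ≤ |p x| := by
    intro c hc hpc x hx hcx
    have := hmono hc hx hcx
    rw [abs_of_nonneg (sub_nonneg.2 hcx)]
    linarith [le_abs_self (p x)]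
  have hleft : ∀ c ∈ Icc a b, p c ≤ 0 → ∀ x ∈ Icc a b, x ≤ c → μ * |x - c| ≤ |p x| := by
    intro c hc hpc x hx hxc
    have := hmono hx hc hxc
    rw [abs_of_nonpos (sub_nonpos.2 hxc)]
    linarith [neg_le_abs (p x)]
  have ha := left_mem_Icc.2 hab
  have hb := right_mem_Icc.2 hab
  rcases le_total 0 (p a) with hpa | hpa
  · exact ⟨a, ha, fun x hx ↦ hright a ha hpa x hx hx.1⟩
  rcases le_total (p b) 0 with hpb | hpb
  · exact ⟨b, hb, fun x hx ↦ hleft b hb hpb x hx hx.2⟩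
  obtain ⟨c, hc, hpc⟩ := intermediate_value_Icc hab hp ⟨hpa, hpb⟩
  exact ⟨c, hc, fun x hx ↦ (le_total c x).elim (hright c hc hpc.ge x hx) (hleft c hc hpc.le x hx)⟩

lemma norm_integral_le_of_norm_integral_away_le {F : Type*} [NormedAddCommGroup F]
    [NormedSpace ℝ F] {f : ℝ → F} {c d M : ℝ} (hc : c ∈ Icc a b) (hd : 0 ≤ d) (hM : 0 ≤ M)
    (hint : IntervalIntegrable f volume a b) (hf : ∀ x, ‖f x‖ ≤ 1)
    (haway : ∀ u v, a ≤ u → u ≤ v → v ≤ b → (∀ x ∈ Icc u v, d ≤ |x - c|) →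
      ‖∫ x in u..v, f x‖ ≤ M) :
    ‖∫ x in a..b, f x‖ ≤ 2 * M + 2 * d := by
  set l := max a (c - d)
  set r := min b (c + d)
  have hal : a ≤ l := le_max_left _ _
  have hlc : l ≤ c := max_le hc.1 (by linarith)
  have hcr : c ≤ r := le_min hc.2 (by linarith)
  have hrb : r ≤ b := min_le_left _ _
  have hsub : ∀ u v, a ≤ u → u ≤ v → v ≤ b → IntervalIntegrable f volume u v := fun u v hu huv hv ↦
    hint.mono_set (by rw [uIcc_of_le huv, uIcc_of_le (hc.1.trans hc.2)]; exact Icc_subset_Icc hu hv)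
  have hleft : ‖∫ x in a..l, f x‖ ≤ M := by
    rcases le_total (c - d) a with h | h
    · rwa [show l = a from max_eq_left h, intervalIntegral.integral_same, norm_zero]
    · refine haway a l le_rfl hal (by linarith) fun x hx ↦ le_abs.2 (Or.inr ?_)
      linarith [hx.2, show l = c - d from max_eq_right h]
  have hright : ‖∫ x in r..b, f x‖ ≤ M := by
    rcases le_total b (c + d) with h | h
    · rwa [show r = b from min_eq_left h, intervalIntegral.integral_same, norm_zero]
    · refine haway r b (by linarith) hrb le_rfl fun x hx ↦ le_abs.2 (Or.inl ?_)
      linarith [hx.1, show r = c + d from min_eq_right h]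
  have hmid : ‖∫ x in l..r, f x‖ ≤ 2 * d := by
    refine (intervalIntegral.norm_integral_le_of_norm_le_const fun x _ ↦ hf x).trans ?_
    rw [one_mul, abs_of_nonneg (by linarith)]
    linarith [le_max_right a (c - d), min_le_right b (c + d)]
  rw [← intervalIntegral.integral_add_adjacent_intervals (hsub a r le_rfl (by linarith) hrb)
      (hsub r b (by linarith) hrb le_rfl),
    ← intervalIntegral.integral_add_adjacent_intervals (hsub a l le_rfl hal (by linarith))
      (hsub l r hal (by linarith) hrb)]
  refine (norm_add₃_le ..).trans ?_
  linarith

-- Away from a window of radius `1 / √μ` around the near-stationary point, `√μ ≤ |φ'|`.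
lemma norm_integral_exp_le_of_le_deriv2 {μ : ℝ} (hab : a ≤ b) (hμ : 0 < μ)
    (hφ : ∀ x ∈ Icc a b, HasDerivWithinAt φ (φ' x) (Icc a b) x)
    (hφ' : ∀ x ∈ Icc a b, HasDerivWithinAt φ' (φ'' x) (Icc a b) x)
    (hφ'' : ∀ x ∈ Icc a b, μ ≤ φ'' x) :
    ‖∫ x in a..b, exp (I * φ x)‖ ≤ 14 / √μ := by
  have hcontφ : ContinuousOn φ (Icc a b) := fun x hx ↦ (hφ x hx).continuousWithinAt
  have hcont : ContinuousOn φ' (Icc a b) := fun x hx ↦ (hφ' x hx).continuousWithinAt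
  have hmono : MonotoneOn (fun x ↦ φ' x - μ * x) (Icc a b) :=
    monotoneOn_of_hasDerivWithinAt_nonneg (convex_Icc a b) (by fun_prop)
      (fun x hx ↦ ((hφ' x (interior_subset hx)).mono interior_subset).sub
        ((hasDerivWithinAt_id x _).const_mul μ))
      fun x hx ↦ by simpa using hφ'' x (interior_subset hx)
  obtain ⟨c, hc, hsep⟩ := exists_mul_abs_sub_le_abs hab hcont hmono
  have hs : 0 < √μ := Real.sqrt_pos.2 hμ
  have haway : ∀ u v, a ≤ u → u ≤ v → v ≤ b → (∀ x ∈ Icc u v, 1 / √μ ≤ |x - c|) →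
      ‖∫ x in u..v, exp (I * φ x)‖ ≤ 6 / √μ := fun u v hu huv hv hdist ↦ by
    have hsub : Icc u v ⊆ Icc a b := Icc_subset_Icc hu hv
    refine norm_integral_exp_le_of_le_abs_deriv huv hs
      (fun x hx ↦ (hφ x (hsub hx)).mono hsub) (fun x hx ↦ (hφ' x (hsub hx)).mono hsub)
      (fun x hx ↦ hμ.le.trans (hφ'' x (hsub hx))) fun x hx ↦ ?_
    calc √μ = μ * (1 / √μ) := by rw [mul_one_div, Real.div_sqrt]
      _ ≤ μ * |x - c| := mul_le_mul_of_nonneg_left (hdist x hx) hμ.le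
      _ ≤ |φ' x| := hsep x (hsub hx)
  calc ‖∫ x in a..b, exp (I * φ x)‖ ≤ 2 * (6 / √μ) + 2 * (1 / √μ) :=
        norm_integral_le_of_norm_integral_away_le hc (by positivity) (by positivity)
          (ContinuousOn.intervalIntegrable_of_Icc hab (by fun_prop))
          (fun x ↦ (norm_exp_I_mul_ofReal _).le) haway
    _ = 14 / √μ := by ring

lemma norm_integral_exp_I_mul_neg (φ : ℝ → ℝ) (a b : ℝ) :
    ‖∫ x in a..b, exp (I * (-φ x : ℝ))‖ = ‖∫ x in a..b, exp (I * φ x)‖ := by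
  have hconj : ∀ x, exp (I * (-φ x : ℝ)) = (starRingEnd ℂ) (exp (I * φ x)) := fun x ↦ by
    simp [← exp_conj]
  simp only [hconj, intervalIntegral.norm_intervalIntegral_eq, integral_conj, RCLike.norm_conj]

theorem norm_integral_exp_le_of_le_abs_deriv2 {μ : ℝ} (hab : a ≤ b) (hμ : 0 < μ)
    (hφ : ∀ x ∈ Icc a b, HasDerivWithinAt φ (φ' x) (Icc a b) x)
    (hφ' : ∀ x ∈ Icc a b, HasDerivWithinAt φ' (φ'' x) (Icc a b) x)
    (hφ'' : ∀ x ∈ Icc a b, μ ≤ |φ'' x|) :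
    ‖∫ x in a..b, exp (I * φ x)‖ ≤ 14 / √μ := by
  -- `φ''` has constant sign because derivatives have the intermediate value property.
  rcases hasDerivWithinAt_forall_lt_or_forall_gt_of_forall_ne (convex_Icc a b) hφ'
    (fun x hx ↦ abs_pos.1 (hμ.trans_le (hφ'' x hx))) with hneg | hpos
  · rw [← norm_integral_exp_I_mul_neg]
    refine norm_integral_exp_le_of_le_deriv2 hab hμ (fun x hx ↦ (hφ x hx).neg)
      (fun x hx ↦ (hφ' x hx).neg) fun x hx ↦ ?_
    simpa only [abs_of_neg (hneg x hx)] using hφ'' x hx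
  · refine norm_integral_exp_le_of_le_deriv2 hab hμ hφ hφ' fun x hx ↦ ?_
    simpa only [abs_of_pos (hpos x hx)] using hφ'' x hx

theorem norm_integral_exp_smul_le_of_le_abs_deriv2 [CompleteSpace E] {ψ ψ' : ℝ → E} {μ : ℝ}
    (hab : a ≤ b) (hμ : 0 < μ)
    (hφ : ∀ x ∈ Icc a b, HasDerivWithinAt φ (φ' x) (Icc a b) x)
    (hφ' : ∀ x ∈ Icc a b, HasDerivWithinAt φ' (φ'' x) (Icc a b) x)
    (hφ'' : ∀ x ∈ Icc a b, μ ≤ |φ'' x|)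
    (hψ : ∀ x ∈ Icc a b, HasDerivWithinAt ψ (ψ' x) (Icc a b) x)
    (hψ' : IntervalIntegrable ψ' volume a b) :
    ‖∫ x in a..b, exp (I * φ x) • ψ x‖ ≤ 14 / √μ * (‖ψ b‖ + ∫ x in a..b, ‖ψ' x‖) := by
  have hcontφ : ContinuousOn φ (Icc a b) := fun x hx ↦ (hφ x hx).continuousWithinAt
  refine norm_integral_smul_le_of_norm_primitive_le hab (by fun_prop) hψ hψ' fun x hx ↦ ?_
  have hsub : Icc a x ⊆ Icc a b := Icc_subset_Icc_right hx.2
  exact norm_integral_exp_le_of_le_abs_deriv2 hx.1 hμ (fun y hy ↦ (hφ y (hsub hy)).mono hsub)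
    (fun y hy ↦ (hφ' y (hsub hy)).mono hsub) fun y hy ↦ hφ'' y (hsub hy)

end VanDerCorput

section Symbol

open Real

lemma tanh_pos_of_pos {x : ℝ} (hx : 0 < x) : 0 < tanh x := by
  rw [tanh_eq_sinh_div_cosh]
  exact div_pos (sinh_pos_iff.2 hx) (cosh_pos x)

lemma one_sub_tanh_sq (x : ℝ) : 1 - tanh x ^ 2 = 1 / cosh x ^ 2 := by
  have := (cosh_pos x).ne'
  rw [tanh_eq_sinh_div_cosh, div_pow, sinh_sq]
  field_simp
  ring

lemma hasDerivAt_tanh (x : ℝ) : HasDerivAt tanh (1 - tanh x ^ 2) x := by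
  have hcosh := (cosh_pos x).ne'
  rw [funext tanh_eq_sinh_div_cosh]
  refine ((hasDerivAt_sinh x).fun_div (hasDerivAt_cosh x) hcosh).congr_deriv ?_
  field_simp

lemma tanh_le_self {x : ℝ} (hx : 0 ≤ x) : tanh x ≤ x := by
  have hderiv (y : ℝ) : HasDerivAt (fun y ↦ tanh y - y) (1 - tanh y ^ 2 - 1) y :=
    (hasDerivAt_tanh y).sub (hasDerivAt_id y)
  have hanti : Antitone fun y ↦ tanh y - y :=
    antitone_of_hasDerivAt_nonpos hderiv fun y ↦
      show 1 - tanh y ^ 2 - 1 ≤ 0 by linarith [sq_nonneg (tanh y)]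
  simpa using hanti hx

lemma cosh_le_two {x : ℝ} (hx : |x| ≤ 1) : cosh x ≤ 2 := by
  refine (cosh_le_cosh.2 (hx.trans_eq abs_one.symm)).trans ?_
  rw [cosh_eq]
  linarith [exp_one_lt_three, exp_le_one_iff.2 (show (-1 : ℝ) ≤ 0 by norm_num)]

lemma half_le_tanh {x : ℝ} (hx : 0 ≤ x) (hx1 : x ≤ 1) : x / 2 ≤ tanh x := by
  rw [tanh_eq_sinh_div_cosh]
  exact div_le_div₀ (sinh_nonneg_iff.2 hx) (self_le_sinh_iff.2 hx) (cosh_pos x)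
    (cosh_le_two (by rwa [abs_of_nonneg hx]))

lemma one_sub_tanh_sq_le {x : ℝ} (hx : 0 ≤ x) : 1 - tanh x ^ 2 ≤ 1 / (1 + x ^ 2) := by
  rw [one_sub_tanh_sq, cosh_sq']
  have := self_le_sinh_iff.2 hx
  gcongr

lemma m1_of_pos {x : ℝ} (hx : 0 < x) : m1 x = √(x * tanh x) := by
  rw [m1, if_neg hx.ne', abs_of_pos hx, show x * tanh x = x ^ 2 * (tanh x / x) by field_simp,
    sqrt_mul (sq_nonneg x), sqrt_sq hx.le]

lemma m1_neg (x : ℝ) : m1 (-x) = -m1 x := by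
  by_cases h : x = 0 <;> simp [m1, h]

lemma hasDerivAt_div_two_mul_sqrt {g g' g'' : ℝ → ℝ} {x : ℝ} (hx : 0 < g x)
    (hg : HasDerivAt g (g' x) x) (hg' : HasDerivAt g' (g'' x) x) :
    HasDerivAt (fun y ↦ g' y / (2 * √(g y)))
      ((2 * g x * g'' x - g' x ^ 2) / (4 * g x * √(g x))) x := by
  have hsqrt : √(g x) ≠ 0 := (sqrt_pos.2 hx).ne'
  refine (hg'.fun_div ((hg.sqrt hx.ne').const_mul 2) (by positivity)).congr_deriv ?_
  have hsq : √(g x) ^ 2 = g x := sq_sqrt hx.le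
  rw [div_eq_div_iff (by positivity) (by positivity), mul_pow, hsq]
  field_simp
  rw [hsq]
  ring

/-- The derivative of `m1` on `(0, ∞)`. -/
def m1Deriv (ξ : ℝ) : ℝ :=
  (tanh ξ + ξ * (1 - tanh ξ ^ 2)) / (2 * √(ξ * tanh ξ))

/-- The second derivative of `m1` on `(0, ∞)`, with the numerator written as minus a sum of
nonnegative terms. -/
def m1Deriv2 (ξ : ℝ) : ℝ :=
  -(((tanh ξ - ξ * (1 - tanh ξ ^ 2)) ^ 2 + 4 * ξ ^ 2 * (1 - tanh ξ ^ 2) * tanh ξ ^ 2) /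
    (4 * (ξ * tanh ξ) * √(ξ * tanh ξ)))

lemma hasDerivAt_mul_tanh (x : ℝ) :
    HasDerivAt (fun y ↦ y * tanh y) (tanh x + x * (1 - tanh x ^ 2)) x :=
  ((hasDerivAt_id x).mul (hasDerivAt_tanh x)).congr_deriv (by simp)

lemma hasDerivAt_m1 {x : ℝ} (hx : 0 < x) : HasDerivAt m1 (m1Deriv x) x :=
  ((hasDerivAt_mul_tanh x).sqrt (mul_pos hx (tanh_pos_of_pos hx)).ne').congr_of_eventuallyEq <|
    (lt_mem_nhds hx).mono fun _ ↦ m1_of_pos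

lemma hasDerivAt_m1Deriv {x : ℝ} (hx : 0 < x) : HasDerivAt m1Deriv (m1Deriv2 x) x := by
  have hderiv2 : HasDerivAt (fun y ↦ tanh y + y * (1 - tanh y ^ 2))
      (2 * (1 - tanh x ^ 2) - 2 * x * tanh x * (1 - tanh x ^ 2)) x := by
    have htanh := hasDerivAt_tanh x
    refine (htanh.add ((hasDerivAt_id x).mul ((htanh.pow 2).const_sub 1))).congr_deriv ?_
    simp only [Pi.pow_apply, one_mul, id_eq, Nat.cast_ofNat, Nat.add_one_sub_one, pow_one, mul_neg]
    ring
  refine (hasDerivAt_div_two_mul_sqrt (g := fun y ↦ y * tanh y)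
    (g' := fun y ↦ tanh y + y * (1 - tanh y ^ 2))
    (g'' := fun y ↦ 2 * (1 - tanh y ^ 2) - 2 * y * tanh y * (1 - tanh y ^ 2))
    (mul_pos hx (tanh_pos_of_pos hx)) (hasDerivAt_mul_tanh x) hderiv2).congr_deriv ?_
  rw [m1Deriv2, ← neg_div]
  ring

lemma m1Deriv2_le_of_le_one {x : ℝ} (hx : 0 < x) (hx1 : x ≤ 1) : m1Deriv2 x ≤ -(x / 16) := by
  have htanh : 0 < tanh x := tanh_pos_of_pos hx
  have hle : tanh x ≤ x := tanh_le_self hx.le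
  have hsech : 1 / 4 ≤ 1 - tanh x ^ 2 := by
    have hcosh := cosh_le_two ((abs_of_pos hx).trans_le hx1)
    calc (1 : ℝ) / 4 = 1 / 2 ^ 2 := by norm_num
      _ ≤ 1 / cosh x ^ 2 := by gcongr
      _ = 1 - tanh x ^ 2 := (one_sub_tanh_sq x).symm
  have hsqrt : √(x * tanh x) ≤ x := (sqrt_le_left hx.le).2 (by rw [sq]; gcongr)
  refine neg_le_neg ((le_div_iff₀ (by positivity)).2 ?_)
  calc x / 16 * (4 * (x * tanh x) * √(x * tanh x))
      ≤ x / 16 * (4 * (x * x) * x) := by gcongr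
    _ = 4 * x ^ 2 * (1 / 4) * (x / 2) ^ 2 := by ring
    _ ≤ 4 * x ^ 2 * (1 - tanh x ^ 2) * tanh x ^ 2 := by
        gcongr
        exact half_le_tanh hx.le hx1
    _ ≤ _ := le_add_of_nonneg_left (sq_nonneg _)

lemma one_fifth_le_tanh_sub {x : ℝ} (hx : 1 ≤ x) : 1 / 5 ≤ tanh x - x * (1 - tanh x ^ 2) := by
  have hx0 : 0 < x := one_pos.trans_le hx
  have hsech := one_sub_tanh_sq_le hx0.le
  have hhalf : 1 - tanh x ^ 2 ≤ 1 / 2 :=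
    hsech.trans (one_div_le_one_div_of_le two_pos (by nlinarith))
  have htanh : 7 / 10 ≤ tanh x := by nlinarith [tanh_pos_of_pos hx0]
  have hmul : x * (1 - tanh x ^ 2) ≤ 1 / 2 := by
    calc x * (1 - tanh x ^ 2) ≤ x * (1 / (1 + x ^ 2)) := by gcongr
      _ ≤ 1 / 2 := by
        rw [mul_one_div, div_le_div_iff₀ (by positivity) two_pos]
        linarith [sq_nonneg (x - 1)]
  linarith

lemma m1Deriv2_le_of_one_le {x : ℝ} (hx : 1 ≤ x) : m1Deriv2 x ≤ -(1 / (100 * (x * √x))) := by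
  have hx0 : 0 < x := one_pos.trans_le hx
  have htanh : 0 < tanh x := tanh_pos_of_pos hx0
  have htanh1 : tanh x ≤ 1 := (tanh_lt_one x).le
  have hsech : 0 ≤ 1 - tanh x ^ 2 := by rw [one_sub_tanh_sq]; positivity
  refine neg_le_neg ?_
  calc 1 / (100 * (x * √x)) = (1 / 5) ^ 2 / (4 * (x * 1) * √(x * 1)) := by ring_nf
    _ ≤ (tanh x - x * (1 - tanh x ^ 2)) ^ 2 / (4 * (x * tanh x) * √(x * tanh x)) := by
        gcongr
        exact one_fifth_le_tanh_sub hx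
    _ ≤ _ := by
        gcongr
        exact le_add_of_nonneg_right (by positivity)

lemma one_le_jap (x : ℝ) : 1 ≤ jap x :=
  one_le_rpow (by linarith [sq_nonneg x]) (by norm_num)

lemma abs_le_jap (x : ℝ) : |x| ≤ jap x := by
  rw [jap, ← sqrt_eq_rpow]
  exact abs_le_sqrt (by linarith)

lemma jap_le_mul_jap {c x y : ℝ} (hc : 1 ≤ c) (hxy : |x| ≤ c * |y|) : jap x ≤ c * jap y := by
  simp only [jap, ← sqrt_eq_rpow]
  refine (sqrt_le_left (by positivity)).2 ?_
  rw [mul_pow, sq_sqrt (by positivity), mul_add, mul_one, ← sq_abs x, ← sq_abs y, ← mul_pow]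
  gcongr
  exact one_le_pow₀ hc

lemma m1Deriv2_le {x : ℝ} (hx : 0 < x) : m1Deriv2 x ≤ -(x / (100 * jap x ^ (5 / 2 : ℝ))) := by
  have hjap1 : 1 ≤ jap x := one_le_jap x
  rcases le_total x 1 with hx1 | hx1
  · refine (m1Deriv2_le_of_le_one hx hx1).trans (neg_le_neg ?_)
    gcongr
    linarith [one_le_rpow hjap1 (show (0 : ℝ) ≤ 5 / 2 by norm_num)]
  · refine (m1Deriv2_le_of_one_le hx1).trans (neg_le_neg ?_)
    have hpow : x * (x * √x) ≤ jap x ^ (5 / 2 : ℝ) := by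
      calc x * (x * √x) = x ^ (5 / 2 : ℝ) := by
            rw [show (5 / 2 : ℝ) = 1 + (1 + 1 / 2) by norm_num, rpow_add hx, rpow_add hx,
              rpow_one, sqrt_eq_rpow]
        _ ≤ jap x ^ (5 / 2 : ℝ) := by
            gcongr
            exact (le_abs_self x).trans (abs_le_jap x)
    rw [div_le_div_iff₀ (by positivity) (by positivity)]
    linarith

lemma le_abs_m1Deriv2 {lam x : ℝ} (hlam : 0 < lam) (hx : x ∈ Icc (1 / 2 * lam) (2 * lam)) :
    lam / (1600 * jap lam ^ (5 / 2 : ℝ)) ≤ |m1Deriv2 x| := by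
  have hx0 : 0 < x := by linarith [hx.1]
  have hjap1 : 1 ≤ jap lam := one_le_jap lam
  have hjapx : 1 ≤ jap x := one_le_jap x
  have hjap : jap x ≤ 2 * jap lam := jap_le_mul_jap one_le_two (by
    rw [abs_of_pos hx0, abs_of_pos hlam]; exact hx.2)
  have hpow : jap x ^ (5 / 2 : ℝ) ≤ 8 * jap lam ^ (5 / 2 : ℝ) := by
    calc jap x ^ (5 / 2 : ℝ) ≤ (2 * jap lam) ^ (5 / 2 : ℝ) := by gcongr
      _ = 2 ^ (5 / 2 : ℝ) * jap lam ^ (5 / 2 : ℝ) := mul_rpow two_pos.le (by positivity)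
      _ ≤ 2 ^ (3 : ℝ) * jap lam ^ (5 / 2 : ℝ) := by
          gcongr
          · exact one_le_two
          · norm_num
      _ = 8 * jap lam ^ (5 / 2 : ℝ) := by norm_num
  calc lam / (1600 * jap lam ^ (5 / 2 : ℝ))
      = 1 / 2 * lam / (100 * (8 * jap lam ^ (5 / 2 : ℝ))) := by ring
    _ ≤ x / (100 * jap x ^ (5 / 2 : ℝ)) := by gcongr; exact hx.1
    _ ≤ |m1Deriv2 x| := (le_neg_of_le_neg (m1Deriv2_le hx0)).trans (neg_le_abs _)

end Symbol

section Decay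

lemma norm_integral_le_add_norm_integral_Ioi {E : Type*} [NormedAddCommGroup E] [NormedSpace ℝ E]
    (f : ℝ → E) :
    ‖∫ x, f x‖ ≤ ‖∫ x in Ioi 0, f x‖ + ‖∫ x in Ioi 0, f (-x)‖ := by
  by_cases hf : Integrable f
  · rw [← intervalIntegral.integral_Iic_add_Ioi hf.integrableOn hf.integrableOn (b := 0),
      integral_comp_neg_Ioi, neg_zero, add_comm]
    exact norm_add_le _ _
  · rw [integral_undef hf, norm_zero]
    positivity

lemma setIntegral_Ioi_mul_comp_abs_div {β : ℝ → ℝ} {a b lam : ℝ} (ha : 0 ≤ a) (hab : a ≤ b)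
    (hlam : 0 < lam) (hsupp : Function.support β ∩ Ioi 0 ⊆ Ioo a b) (f : ℝ → ℂ) :
    ∫ ξ in Ioi 0, f ξ * (β (|ξ| / lam) : ℂ) =
      ∫ ξ in (a * lam)..(b * lam), f ξ • (β (ξ / lam) : ℂ) := by
  have hshell : Ioc (a * lam) (b * lam) ⊆ Ioi 0 := fun ξ hξ ↦
    (mul_nonneg ha hlam.le).trans_lt hξ.1
  have hzero : ∀ ξ ∈ Ioi 0 \ Ioc (a * lam) (b * lam), f ξ * (β (|ξ| / lam) : ℂ) = 0 := by
    intro ξ hξ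
    have hβ : β (|ξ| / lam) = 0 := by
      by_contra hne
      rw [abs_of_pos hξ.1] at hne
      obtain ⟨hlow, hup⟩ := hsupp ⟨hne, div_pos hξ.1 hlam⟩
      exact hξ.2 ⟨(lt_div_iff₀ hlam).1 hlow, ((div_lt_iff₀ hlam).1 hup).le⟩
    rw [hβ, Complex.ofReal_zero, mul_zero]
  rw [setIntegral_eq_of_subset_of_forall_sdiff_eq_zero measurableSet_Ioi hshell hzero,
    intervalIntegral.integral_of_le (by gcongr)]
  refine setIntegral_congr_fun measurableSet_Ioc fun ξ hξ ↦ ?_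
  have hξ0 : 0 < ξ := hshell hξ
  simp only [abs_of_pos hξ0, smul_eq_mul]

lemma integral_norm_inv_smul_comp_div {E : Type*} [NormedAddCommGroup E] [NormedSpace ℝ E]
    (f : ℝ → E) {lam : ℝ} (hlam : 0 < lam) (a b : ℝ) :
    ∫ ξ in (a * lam)..(b * lam), ‖lam⁻¹ • f (ξ / lam)‖ = ∫ s in a..b, ‖f s‖ := by
  simp only [norm_smul, norm_inv, Real.norm_of_nonneg hlam.le]
  rw [intervalIntegral.integral_const_mul, ← smul_eq_mul,
    intervalIntegral.inv_smul_integral_comp_div (fun s ↦ ‖f s‖), mul_div_cancel_right₀ _ hlam.ne',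
    mul_div_cancel_right₀ _ hlam.ne']

lemma one_div_sqrt_mul_div_rpow {s lam J : ℝ} (hs : 0 < s) (hlam : 0 < lam) (hJ : 0 < J) :
    1 / √(s * (lam / (1600 * J ^ (5 / 2 : ℝ)))) =
      40 * (s ^ (-1 / 2 : ℝ) * lam ^ (-1 / 2 : ℝ) * J ^ (5 / 4 : ℝ)) := by
  have hsqrt : √(J ^ (5 / 2 : ℝ)) = J ^ (5 / 4 : ℝ) := by
    rw [Real.sqrt_eq_rpow, ← Real.rpow_mul hJ.le]
    norm_num
  have hinv {y : ℝ} (hy : 0 < y) : y ^ (-1 / 2 : ℝ) = (√y)⁻¹ := by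
    rw [neg_div, Real.rpow_neg hy.le, Real.sqrt_eq_rpow]
  have h1600 : √1600 = (40 : ℝ) := by
    rw [show (1600 : ℝ) = 40 ^ 2 by norm_num, Real.sqrt_sq (by norm_num)]
  rw [Real.sqrt_mul hs.le, Real.sqrt_div hlam.le, Real.sqrt_mul (by norm_num), hsqrt,
    h1600, hinv hs, hinv hlam]
  field_simp

lemma norm_integral_exp_m1_smul_le {E : Type*} [NormedAddCommGroup E] [NormedSpace ℂ E]
    [CompleteSpace E] {ψ ψ' : ℝ → E} {lam : ℝ} (hlam : 0 < lam) (x : ℝ) {t : ℝ} (ht : t ≠ 0)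
    (hψ : ∀ ξ ∈ Icc (1 / 2 * lam) (2 * lam),
      HasDerivWithinAt ψ (ψ' ξ) (Icc (1 / 2 * lam) (2 * lam)) ξ)
    (hψ' : IntervalIntegrable ψ' volume (1 / 2 * lam) (2 * lam)) :
    ‖∫ ξ in (1 / 2 * lam)..(2 * lam),
        Complex.exp (Complex.I * ((x * ξ + t * m1 ξ : ℝ) : ℂ)) • ψ ξ‖ ≤
      14 / √(|t| * (lam / (1600 * jap lam ^ (5 / 2 : ℝ)))) *
        (‖ψ (2 * lam)‖ + ∫ ξ in (1 / 2 * lam)..(2 * lam), ‖ψ' ξ‖) := by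
  have hpos : ∀ ξ ∈ Icc (1 / 2 * lam) (2 * lam), 0 < ξ := fun ξ hξ ↦
    (mul_pos one_half_pos hlam).trans_le hξ.1
  have hjap : 0 < jap lam := one_pos.trans_le (one_le_jap lam)
  have hphase : ∀ ξ ∈ Icc (1 / 2 * lam) (2 * lam),
      HasDerivAt (fun ξ ↦ x * ξ + t * m1 ξ) (x + t * m1Deriv ξ) ξ := fun ξ hξ ↦
    (hasDerivAt_const_mul x).add ((hasDerivAt_m1 (hpos ξ hξ)).const_mul t)
  have hphase' : ∀ ξ ∈ Icc (1 / 2 * lam) (2 * lam),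
      HasDerivAt (fun ξ ↦ x + t * m1Deriv ξ) (t * m1Deriv2 ξ) ξ := fun ξ hξ ↦
    ((hasDerivAt_m1Deriv (hpos ξ hξ)).const_mul t).const_add x
  have hphase'' : ∀ ξ ∈ Icc (1 / 2 * lam) (2 * lam),
      |t| * (lam / (1600 * jap lam ^ (5 / 2 : ℝ))) ≤ |t * m1Deriv2 ξ| := fun ξ hξ ↦ by
    rw [abs_mul]
    exact mul_le_mul_of_nonneg_left (le_abs_m1Deriv2 hlam hξ) (abs_nonneg t)
  exact norm_integral_exp_smul_le_of_le_abs_deriv2 (by linarith) (by positivity)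
    (fun ξ hξ ↦ (hphase ξ hξ).hasDerivWithinAt) (fun ξ hξ ↦ (hphase' ξ hξ).hasDerivWithinAt)
    hphase'' hψ hψ'

lemma norm_integral_Ioi_exp_m1_mul_le {β : ℝ → ℝ} (hβ : ContDiff ℝ 1 β)
    (hsupp : Function.support β ∩ Ioi 0 ⊆ Ioo (1 / 2) 2) {lam : ℝ} (hlam : 0 < lam) (x : ℝ)
    {t : ℝ} (ht : t ≠ 0) :
    ‖∫ ξ in Ioi 0, Complex.exp (Complex.I * ((x * ξ + t * m1 ξ : ℝ) : ℂ)) *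
        (β (|ξ| / lam) : ℂ)‖ ≤
      14 / √(|t| * (lam / (1600 * jap lam ^ (5 / 2 : ℝ)))) * ∫ s in (1 / 2)..2, |deriv β s| := by
  have hamp (ξ : ℝ) : HasDerivAt (fun ξ ↦ (β (ξ / lam) : ℂ))
      (lam⁻¹ • ((deriv β (ξ / lam) : ℝ) : ℂ)) ξ := by
    rw [← one_div]
    exact (hβ.differentiable one_ne_zero _).hasDerivAt.ofReal_comp.scomp ξ
      ((hasDerivAt_id ξ).div_const lam)
  have hamp_cont : Continuous fun ξ ↦ lam⁻¹ • ((deriv β (ξ / lam) : ℝ) : ℂ) := by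
    have := hβ.continuous_deriv le_rfl
    fun_prop
  have hend : β (2 * lam / lam) = 0 := by
    rw [mul_div_cancel_right₀ _ hlam.ne']
    by_contra hne
    exact lt_irrefl _ (hsupp ⟨hne, mem_Ioi.2 two_pos⟩).2
  have hshell := norm_integral_exp_m1_smul_le hlam x ht (fun ξ _ ↦ (hamp ξ).hasDerivWithinAt)
    (hamp_cont.intervalIntegrable _ _)
  have hvar := integral_norm_inv_smul_comp_div (fun s ↦ ((deriv β s : ℝ) : ℂ)) hlam (1 / 2) 2
  simp only [Complex.norm_real, Real.norm_eq_abs] at hvar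
  rwa [hend, Complex.ofReal_zero, norm_zero, zero_add, hvar,
    ← setIntegral_Ioi_mul_comp_abs_div (by norm_num) (by norm_num) hlam hsupp
      fun ξ ↦ Complex.exp (Complex.I * ((x * ξ + t * m1 ξ : ℝ) : ℂ))] at hshell

lemma norm_oscInt_le {χ : ℝ → ℝ} (hβ : ContDiff ℝ 1 (betaCut χ))
    (hsupp : Function.support (betaCut χ) ∩ Ioi 0 ⊆ Ioo (1 / 2) 2) {lam : ℝ} (hlam : 0 < lam)
    (x : ℝ) {t : ℝ} (ht : t ≠ 0) :
    ‖oscInt χ lam x t‖ ≤ 1120 * (∫ s in (1 / 2)..2, |deriv (betaCut χ) s|) *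
      (|t| ^ (-1 / 2 : ℝ) * lam ^ (-1 / 2 : ℝ) * jap lam ^ (5 / 4 : ℝ)) := by
  have hreflect (ξ : ℝ) : x * -ξ + t * m1 (-ξ) = -x * ξ + -t * m1 ξ := by rw [m1_neg]; ring
  have hright := norm_integral_Ioi_exp_m1_mul_le hβ hsupp hlam x ht
  have hleft := norm_integral_Ioi_exp_m1_mul_le hβ hsupp hlam (-x) (neg_ne_zero.2 ht)
  have hhalves := norm_integral_le_add_norm_integral_Ioi fun ξ ↦
    Complex.exp (Complex.I * ((x * ξ + t * m1 ξ : ℝ) : ℂ)) * (betaCut χ (|ξ| / lam) : ℂ)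
  simp only [hreflect, abs_neg] at hhalves
  rw [abs_neg] at hleft
  rw [div_eq_mul_one_div, one_div_sqrt_mul_div_rpow (abs_pos.2 ht) hlam
    (one_pos.trans_le (one_le_jap lam))] at hright hleft
  refine hhalves.trans ((add_le_add hright hleft).trans_eq ?_)
  ring

lemma contDiff_betaCut {χ : ℝ → ℝ} {n : WithTop ℕ∞} (hχ : ContDiff ℝ n χ) :
    ContDiff ℝ n (betaCut χ) := by
  unfold betaCut
  fun_prop

lemma support_betaCut_inter_Ioi_subset {χ : ℝ → ℝ}
    (hsupp : Function.support χ ⊆ Ioo (-2) 2) (hone : ∀ s ∈ Icc (-1) 1, χ s = 1) :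
    Function.support (betaCut χ) ∩ Ioi 0 ⊆ Ioo (1 / 2) 2 := by
  have hzero {s : ℝ} (hs : 2 ≤ s) : χ s = 0 :=
    Function.notMem_support.1 fun h ↦ (hsupp h).2.not_ge hs
  rintro s ⟨hs, hs0 : 0 < s⟩
  contrapose! hs
  rw [Function.notMem_support, betaCut, sub_eq_zero]
  rcases le_or_gt s (1 / 2) with hs1 | hs1
  · rw [hone s ⟨by linarith, by linarith⟩, hone (2 * s) ⟨by linarith, by linarith⟩]
  · have hs2 : 2 ≤ s := not_lt.1 fun h ↦ hs ⟨hs1, h⟩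
    rw [hzero hs2, hzero (by linarith)]

theorem oscInt_decay_general (χ : ℝ → ℝ) (hβ : ContDiff ℝ 1 (betaCut χ))
    (hsupp : Function.support (betaCut χ) ∩ Ioi 0 ⊆ Ioo (1 / 2) 2) :
    ∃ C : ℝ, 0 < C ∧
      ∀ lam : ℝ, 0 < lam → ∀ x t : ℝ, t ≠ 0 →
        ‖oscInt χ lam x t‖
          ≤ C * |t| ^ (-(1 : ℝ) / 2) * lam ^ (-(1 : ℝ) / 2) * jap lam ^ ((5 : ℝ) / 4) := by
  have hvar : 0 ≤ ∫ s in (1 / 2)..2, |deriv (betaCut χ) s| :=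
    intervalIntegral.integral_nonneg (by norm_num) fun _ _ ↦ abs_nonneg _
  refine ⟨1120 * (∫ s in (1 / 2)..2, |deriv (betaCut χ) s|) + 1, by positivity,
    fun lam hlam x t ht ↦ (norm_oscInt_le hβ hsupp hlam x ht).trans ?_⟩
  have hjap : 0 ≤ jap lam := zero_le_one.trans (one_le_jap lam)
  refine (mul_le_mul_of_nonneg_right (le_add_of_nonneg_right zero_le_one) ?_).trans_eq ?_
  · positivity
  · ring

end Decay

/-- There is a constant `C`, depending only on the cutoff `β` (i.e. on `χ`),
such that for all `λ > 0`, all `x ∈ ℝ` and all `t ≠ 0`,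
`|I_{λ,1}(x,t)| ≤ C |t|^{-1/2} λ^{-1/2} ⟨λ⟩^{5/4}`. -/
theorem oscInt_decay (χ : ℝ → ℝ) (hχ : ContDiff ℝ (⊤ : ℕ∞) χ)
    (hsupp : Function.support χ ⊆ Set.Ioo (-2 : ℝ) 2)
    (hone : ∀ s ∈ Set.Icc (-1 : ℝ) 1, χ s = 1) :
    ∃ C : ℝ, 0 < C ∧
      ∀ lam : ℝ, 0 < lam → ∀ x t : ℝ, t ≠ 0 →
        ‖oscInt χ lam x t‖
          ≤ C * |t| ^ (-(1 : ℝ) / 2) * lam ^ (-(1 : ℝ) / 2) * jap lam ^ ((5 : ℝ) / 4) :=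
  oscInt_decay_general χ ((contDiff_betaCut hχ).of_le (by simp))
    (support_betaCut_inter_Ioi_subset hsupp hone)
end
end
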